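/- Let ψ(w) = w − ⌊w⌋ − 1/2. For any positive integer H and real w, with α_{h,H} = (1/(πh))·ρ(h/(H+1)) where ρ(ξ) = πξ(1−ξ)cot(πξ) + ξ, and β_{h,H} = (1/(H+1))(1 − h/(H+1)), one has the pointwise bound −ψ(w) ≥ ∑_{h=1}^{H} α_{h,H} sin(2πhw) − ∑_{h=1}^{H} β_{h,H} cos(2πhw) − 1/(2H+2). -/

import Mathlib

open Real

/-- Vaaler's function `ρ(ξ) = πξ(1-ξ)cot(πξ) + ξ`. -/
noncomputable def vaalerRho (ξ : ℝ) : ℝ :=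
  π * ξ * (1 - ξ) * (Real.cos (π * ξ) / Real.sin (π * ξ)) + ξ

/-- `sinc` is antitone on `(0, π)`, in product form. -/
lemma sinc_aux (y t : ℝ) (hy : 0 < y) (hyt : y < t) (ht : t < π) :
    y * sin t ≤ t * sin y := by
  have c := strictConcaveOn_sin_Icc.concaveOn.2
  have m0 : (0 : ℝ) ∈ Set.Icc 0 π := ⟨le_rfl, pi_pos.le⟩
  have m1 : t ∈ Set.Icc 0 π := ⟨by linarith, ht.le⟩
  have h := c m0 m1 (a := 1 - y / t) (b := y / t)
    (by rw [sub_nonneg, div_le_one (by linarith)]; exact hyt.le)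
    (div_nonneg hy.le (by linarith)) (by ring)
  have ht0 : 0 < t := by linarith
  have h3 : y / t * t = y := by field_simp
  simp only [smul_eq_mul, mul_zero, sin_zero, zero_add, h3] at h
  have h2 := mul_le_mul_of_nonneg_left h ht0.le
  have h4 : t * (y / t * sin t) = y * sin t := by field_simp
  linarith

lemma ucos_le_sin (u : ℝ) (hu : 0 < u) (hu' : u < π) : u * cos u ≤ sin u := by
  by_cases h : u < π / 2
  · have h1 := Real.lt_tan hu h
    have hc : 0 < cos u := cos_pos_of_mem_Ioo ⟨by linarith, h⟩
    rw [tan_eq_sin_div_cos, lt_div_iff₀ hc] at h1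
    exact h1.le
  · have hc : cos u ≤ 0 := cos_nonpos_of_pi_div_two_le_of_le (by linarith) (by linarith)
    have hs := sin_pos_of_pos_of_lt_pi hu hu'
    nlinarith

/-- The key inequality, with denominators cleared up to the sign of `sin (x+t)`. -/
lemma key_aux (x t : ℝ) (ht : 0 < t) (hx : -π < x) (hxt : x + t < π) (hx0 : x ≠ 0)
    (hy0 : x + t ≠ 0) :
    x * t ≤ (x + t) * sin t * sin x / sin (x + t) := by
  rcases lt_or_gt_of_ne hx0 with h | h
  · obtain ⟨s, rfl⟩ : ∃ s, x = -s := ⟨-x, by ring⟩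
    have hs : 0 < s := by linarith
    have hss := sin_pos_of_pos_of_lt_pi hs (by linarith)
    rcases lt_or_gt_of_ne hy0 with h' | h'
    · obtain ⟨z, hz⟩ : ∃ z, z = s - t := ⟨_, rfl⟩
      have e : -s + t = -z := by rw [hz]; ring
      rw [e, sin_neg, sin_neg]
      have hz0 : 0 < z := by linarith
      have hsz := sin_pos_of_pos_of_lt_pi hz0 (by linarith)
      have e2 : -z * sin t * -sin s / -sin z = -(z * sin t * sin s / sin z) := by
        rw [div_neg]; ring
      rw [e2]
      have h1 := sinc_aux z s hz0 (by linarith) (by linarith)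
      have h2 := Real.sin_le ht.le
      have : z * sin t * sin s / sin z ≤ s * t := by
        rw [div_le_iff₀ hsz]
        calc z * sin t * sin s = sin t * (z * sin s) := by ring
          _ ≤ t * (z * sin s) := by
              apply mul_le_mul_of_nonneg_right h2; positivity
          _ ≤ t * (s * sin z) := by gcongr
          _ = _ := by ring
      linarith
    · obtain ⟨z, hz⟩ : ∃ z, z = -s + t := ⟨_, rfl⟩
      rw [← hz, sin_neg]
      have hz0 : 0 < z := by linarith
      have htp : t < π ∨ π ≤ t := lt_or_ge t π
      have hsz := sin_pos_of_pos_of_lt_pi hz0 (by linarith)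
      have h2 := Real.sin_le hs.le
      have : z * sin t * sin s / sin z ≤ s * t := by
        rw [div_le_iff₀ hsz]
        rcases htp with htp | htp
        · have h1 := sinc_aux z t hz0 (by linarith) htp
          calc z * sin t * sin s = sin s * (z * sin t) := by ring
            _ ≤ s * (z * sin t) := by
                apply mul_le_mul_of_nonneg_right h2
                have := sin_pos_of_pos_of_lt_pi ht htp
                positivity
            _ ≤ s * (t * sin z) := by gcongr
            _ = _ := by ring
        · have h3 : sin t ≤ 0 := by
            have := sin_nonneg_of_nonneg_of_le_pi (x := t - π) (by linarith) (by linarith)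
            rw [sin_sub_pi] at this; linarith
          have h4 : 0 ≤ z * sin s * (-sin t) := by
            apply mul_nonneg (by positivity); linarith
          have h5 : 0 ≤ s * t * sin z := by positivity
          linarith
      have e2 : z * sin t * -sin s / sin z = -(z * sin t * sin s / sin z) := by ring
      rw [e2]; linarith
  · have hy : 0 < x + t := by linarith
    have hsy := sin_pos_of_pos_of_lt_pi hy hxt
    have hsx := sin_pos_of_pos_of_lt_pi h (by linarith)
    have hst := sin_pos_of_pos_of_lt_pi ht (by linarith)
    rw [le_div_iff₀ hsy, sin_add]
    have h1 := ucos_le_sin x h (by linarith)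
    have h2 := ucos_le_sin t ht (by linarith)
    have h3 : 0 ≤ t * sin t * (sin x - x * cos x) := mul_nonneg (by positivity) (by linarith)
    have h4 : 0 ≤ x * sin x * (sin t - t * cos t) := mul_nonneg (by positivity) (by linarith)
    linarith

lemma sin_ne_aux (x : ℝ) (h1 : -π < x) (h2 : x < π) (h0 : x ≠ 0) : sin x ≠ 0 := by
  rcases lt_or_gt_of_ne h0 with h | h
  · exact (sin_neg_of_neg_of_neg_pi_lt h h1).ne
  · exact (sin_pos_of_pos_of_lt_pi h h2).ne'

/-- Concavity of `x cot x`. -/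
lemma key (x t : ℝ) (ht : 0 < t) (hx : -π < x) (hxt : x + t < π) (hx0 : x ≠ 0)
    (hy0 : x + t ≠ 0) :
    (x + t) * (cos (x + t) / sin (x + t)) - x * (cos x / sin x)
      ≤ t * (cos x / sin x - x / sin x ^ 2) := by
  have h := key_aux x t ht hx hxt hx0 hy0
  have hsx := sin_ne_aux x hx (by linarith) hx0
  have hsy := sin_ne_aux (x + t) (by linarith) hxt hy0
  have hp : 0 < sin x ^ 2 := by positivity
  have e : t * (cos x / sin x - x / sin x ^ 2)
      - ((x + t) * (cos (x + t) / sin (x + t)) - x * (cos x / sin x))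
      = ((x + t) * sin t * sin x / sin (x + t) - x * t) / sin x ^ 2 := by
    have : sin t = sin (x + t) * cos x - cos (x + t) * sin x := by
      rw [← sin_sub]; congr 1; ring
    rw [this]
    generalize sin (x + t) = S at *
    generalize cos (x + t) = C at *
    field_simp
    ring
  have : 0 ≤ ((x + t) * sin t * sin x / sin (x + t) - x * t) / sin x ^ 2 :=
    div_nonneg (by linarith) hp.le
  linarith

lemma dsum (H : ℕ) (y : ℝ) :
    2 * sin y * ∑ h ∈ Finset.Icc 1 H, sin (2 * (h : ℝ) * y)
      = cos y - cos ((2 * (H : ℝ) + 1) * y) := by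
  induction H with
  | zero => simp
  | succ n ih =>
    rw [Finset.sum_Icc_succ_top (by omega), mul_add, ih]
    push_cast
    have e1 : (2 * (n : ℝ) + 1) * y = 2 * ((n : ℝ) + 1) * y - y := by ring
    have e2 : (2 * ((n : ℝ) + 1) + 1) * y = 2 * ((n : ℝ) + 1) * y + y := by ring
    rw [e1, e2, cos_sub, cos_add]; ring

lemma csum (H : ℕ) (y : ℝ) :
    sin y * (1 + 2 * ∑ h ∈ Finset.Icc 1 H, cos (2 * (h : ℝ) * y))
      = sin ((2 * (H : ℝ) + 1) * y) := by
  induction H with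
  | zero => simp
  | succ n ih =>
    rw [Finset.sum_Icc_succ_top (by omega), mul_add 2, ← add_assoc, mul_add (sin y), ih]
    push_cast
    have e1 : (2 * (n : ℝ) + 1) * y = 2 * ((n : ℝ) + 1) * y - y := by ring
    have e2 : (2 * ((n : ℝ) + 1) + 1) * y = 2 * ((n : ℝ) + 1) * y + y := by ring
    rw [e1, e2, sin_sub, sin_add]; ring

noncomputable def Qf (H : ℕ) (y : ℝ) : ℝ :=
  ((H : ℝ) + 1) + 2 * ∑ h ∈ Finset.Icc 1 H, ((H : ℝ) + 1 - h) * cos (2 * (h : ℝ) * y)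

noncomputable def Df (H : ℕ) (y : ℝ) : ℝ := ∑ h ∈ Finset.Icc 1 H, sin (2 * (h : ℝ) * y)

lemma qsum (H : ℕ) (y : ℝ) : sin y ^ 2 * Qf H y = sin (((H : ℝ) + 1) * y) ^ 2 := by
  induction H with
  | zero => simp [Qf]
  | succ n ih =>
    have e : Qf (n + 1) y = Qf n y
        + (1 + 2 * ∑ h ∈ Finset.Icc 1 (n + 1), cos (2 * (h : ℝ) * y)) := by
      unfold Qf
      rw [Finset.sum_Icc_succ_top (by omega), Finset.sum_Icc_succ_top (by omega)]
      have : ∑ h ∈ Finset.Icc 1 n, (((n + 1 : ℕ) : ℝ) + 1 - h) * cos (2 * (h : ℝ) * y)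
          = ∑ h ∈ Finset.Icc 1 n, ((n : ℝ) + 1 - h) * cos (2 * (h : ℝ) * y)
            + ∑ h ∈ Finset.Icc 1 n, cos (2 * (h : ℝ) * y) := by
        rw [← Finset.sum_add_distrib]
        refine Finset.sum_congr rfl fun h _ => ?_
        push_cast; ring
      rw [this]; push_cast; ring
    have c := csum (n + 1) y
    rw [e, mul_add, ih, sq (sin y), mul_assoc, c]
    push_cast
    set a := ((n : ℝ) + 1) * y with ha
    have e1 : ((n : ℝ) + 1 + 1) * y = a + y := by rw [ha]; ring
    have e2 : (2 * ((n : ℝ) + 1) + 1) * y = a + (a + y) := by rw [ha]; ring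
    have e3 : sin y = sin (a + y) * cos a - cos (a + y) * sin a := by
      rw [← sin_sub]; congr 1; ring
    rw [e1, e2, sin_add a (a + y), e3]
    have p := sin_sq_add_cos_sq a
    have q := sin_sq_add_cos_sq (a + y)
    linear_combination (sin (a+y))^2 * p - (sin a)^2 * q

/-- Telescoping of shifted sines. -/
lemma tele1 (N : ℕ) (p θ : ℝ) :
    2 * sin (θ / 2) * ∑ k ∈ Finset.range N, sin (p - ((k : ℝ) + 1) * θ)
      = cos (p - θ / 2 - N * θ) - cos (p - θ / 2) := by
  induction N with
  | zero => simp
  | succ n ih =>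
    rw [Finset.sum_range_succ, mul_add, ih]
    push_cast
    have e1 : p - θ / 2 - n * θ = (p - ((n : ℝ) + 1) * θ) + θ / 2 := by ring
    have e2 : p - θ / 2 - ((n : ℝ) + 1) * θ = (p - ((n : ℝ) + 1) * θ) - θ / 2 := by ring
    rw [e1, e2]
    generalize p - ((n : ℝ) + 1) * θ = q
    rw [cos_add, cos_sub q]; ring

lemma tele2 (N : ℕ) (p θ : ℝ) :
    2 * sin (θ / 2) * ∑ k ∈ Finset.range N, ((k : ℝ) + 1) * cos (p - ((k : ℝ) + 1) * θ)
      = ∑ k ∈ Finset.range N, sin (p + θ / 2 - ((k : ℝ) + 1) * θ)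
        - N * sin (p - θ / 2 - N * θ) := by
  induction N with
  | zero => simp
  | succ n ih =>
    rw [Finset.sum_range_succ, Finset.sum_range_succ, mul_add, ih]
    push_cast
    have e1 : p - θ / 2 - n * θ = (p - ((n : ℝ) + 1) * θ) + θ / 2 := by ring
    have e2 : p - θ / 2 - ((n : ℝ) + 1) * θ = (p - ((n : ℝ) + 1) * θ) - θ / 2 := by ring
    have e3 : p + θ / 2 - ((n : ℝ) + 1) * θ = (p - ((n : ℝ) + 1) * θ) + θ / 2 := by ring
    rw [e1, e2, e3]
    generalize p - ((n : ℝ) + 1) * θ = q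
    rw [sin_add, sin_sub]; ring

lemma ht_sin (H h : ℕ) (h1 : 1 ≤ h) (h2 : h ≤ H) : 0 < sin ((h : ℝ) * (π / ((H : ℝ) + 1))) := by
  have h1' : (1 : ℝ) ≤ h := by exact_mod_cast h1
  have h2' : (h : ℝ) ≤ H := by exact_mod_cast h2
  have hp := pi_pos
  apply sin_pos_of_pos_of_lt_pi
  · positivity
  · rw [← mul_div_assoc, div_lt_iff₀ (by linarith)]; nlinarith

lemma orth (H h : ℕ) (h1 : 1 ≤ h) (h2 : h ≤ H) (p : ℝ) :
    ∑ k ∈ Finset.range (H + 1),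
      sin (p - ((k : ℝ) + 1) * (2 * (h : ℝ) * (π / ((H : ℝ) + 1)))) = 0 := by
  have t := tele1 (H + 1) p (2 * (h : ℝ) * (π / ((H : ℝ) + 1)))
  have e : 2 * (h : ℝ) * (π / ((H : ℝ) + 1)) / 2 = (h : ℝ) * (π / ((H : ℝ) + 1)) := by ring
  have hN : (H : ℝ) + 1 ≠ 0 := by positivity
  have e2 : ((H + 1 : ℕ) : ℝ) * (2 * (h : ℝ) * (π / ((H : ℝ) + 1))) = h * (2 * π) := by
    push_cast; field_simp
  rw [e2, cos_sub_nat_mul_two_pi, sub_self, e] at t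
  have := ht_sin H h h1 h2
  rcases mul_eq_zero.1 t with t | t
  · exfalso; linarith
  · exact t

lemma wsum (H h : ℕ) (h1 : 1 ≤ h) (h2 : h ≤ H) (p : ℝ) :
    ∑ k ∈ Finset.range (H + 1), ((k : ℝ) + 1) *
      cos (p - ((k : ℝ) + 1) * (2 * (h : ℝ) * (π / ((H : ℝ) + 1))))
    = ((H : ℝ) + 1) / 2 * (cos p - cos ((h : ℝ) * (π / ((H : ℝ) + 1))) /
        sin ((h : ℝ) * (π / ((H : ℝ) + 1))) * sin p) := by
  have t := tele2 (H + 1) p (2 * (h : ℝ) * (π / ((H : ℝ) + 1)))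
  have e : 2 * (h : ℝ) * (π / ((H : ℝ) + 1)) / 2 = (h : ℝ) * (π / ((H : ℝ) + 1)) := by ring
  have hN : (H : ℝ) + 1 ≠ 0 := by positivity
  have e2 : ((H + 1 : ℕ) : ℝ) * (2 * (h : ℝ) * (π / ((H : ℝ) + 1))) = h * (2 * π) := by
    push_cast; field_simp
  rw [orth H h h1 h2, e2, sin_sub_nat_mul_two_pi, e, sin_sub] at t
  have hs := ht_sin H h h1 h2
  generalize (∑ k ∈ Finset.range (H + 1), ((k : ℝ) + 1) *
      cos (p - ((k : ℝ) + 1) * (2 * (h : ℝ) * (π / ((H : ℝ) + 1))))) = X at *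
  generalize sin ((h : ℝ) * (π / ((H : ℝ) + 1))) = S at *
  generalize cos ((h : ℝ) * (π / ((H : ℝ) + 1))) = C at *
  push_cast at t
  field_simp
  linarith

lemma sumD (H : ℕ) (y : ℝ) :
    ∑ k ∈ Finset.range (H + 1), Df H (y - ((k : ℝ) + 1) * (π / ((H : ℝ) + 1))) = 0 := by
  unfold Df
  rw [Finset.sum_comm]
  refine Finset.sum_eq_zero fun h hh => ?_
  rw [Finset.mem_Icc] at hh
  rw [← orth H h hh.1 hh.2 (2 * h * y)]
  refine Finset.sum_congr rfl fun k _ => ?_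
  congr 1; ring

lemma sumQ (H : ℕ) (y : ℝ) :
    ∑ k ∈ Finset.range (H + 1), Qf H (y - ((k : ℝ) + 1) * (π / ((H : ℝ) + 1)))
      = ((H : ℝ) + 1) ^ 2 := by
  unfold Qf
  rw [Finset.sum_add_distrib, ← Finset.mul_sum, Finset.sum_comm]
  rw [Finset.sum_eq_zero (s := Finset.Icc 1 H)]
  · simp; ring
  intro h hh
  rw [Finset.mem_Icc] at hh
  rw [← Finset.mul_sum]
  have := orth H h hh.1 hh.2 (2 * h * y + π / 2)
  rw [mul_eq_zero]; right
  rw [← this]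
  refine Finset.sum_congr rfl fun k _ => ?_
  rw [← sin_add_pi_div_two]
  congr 1; ring

lemma sumkQ (H : ℕ) (y : ℝ) :
    ∑ k ∈ Finset.range (H + 1), ((k : ℝ) + 1) * Qf H (y - ((k : ℝ) + 1) * (π / ((H : ℝ) + 1)))
      = ((H : ℝ) + 1) ^ 2 * ((H : ℝ) + 2) / 2 + ((H : ℝ) + 1) *
        ∑ h ∈ Finset.Icc 1 H, ((H : ℝ) + 1 - h) * (cos (2 * h * y) -
        cos ((h : ℝ) * (π / ((H : ℝ) + 1))) / sin ((h : ℝ) * (π / ((H : ℝ) + 1))) *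
          sin (2 * h * y)) := by
  unfold Qf
  have g : ∀ n : ℕ, ∑ k ∈ Finset.range n, ((k : ℝ) + 1) = n * (n + 1) / 2 := by
    intro n
    induction n with
    | zero => simp
    | succ n ih => rw [Finset.sum_range_succ, ih]; push_cast; ring
  simp only [mul_add (_ + 1 : ℝ) (_ + 1 : ℝ)]
  rw [Finset.sum_add_distrib, ← Finset.sum_mul, g]
  have e : ∑ k ∈ Finset.range (H + 1), ((k : ℝ) + 1) * (2 * ∑ h ∈ Finset.Icc 1 H,
      ((H : ℝ) + 1 - h) * cos (2 * (h : ℝ) * (y - ((k : ℝ) + 1) * (π / ((H : ℝ) + 1)))))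
      = ((H : ℝ) + 1) *
        ∑ h ∈ Finset.Icc 1 H, ((H : ℝ) + 1 - h) * (cos (2 * h * y) -
        cos ((h : ℝ) * (π / ((H : ℝ) + 1))) / sin ((h : ℝ) * (π / ((H : ℝ) + 1))) *
          sin (2 * h * y)) := by
    simp only [Finset.mul_sum]
    rw [Finset.sum_comm]
    refine Finset.sum_congr rfl fun h hh => ?_
    rw [Finset.mem_Icc] at hh
    have w := wsum H h hh.1 hh.2 (2 * h * y)
    have : ((H : ℝ) + 1) * (((H : ℝ) + 1 - h) * (cos (2 * h * y) -
        cos ((h : ℝ) * (π / ((H : ℝ) + 1))) / sin ((h : ℝ) * (π / ((H : ℝ) + 1))) *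
          sin (2 * h * y))) = (2 * ((H : ℝ) + 1 - h)) * (((H : ℝ) + 1) / 2 * (cos (2 * h * y) -
        cos ((h : ℝ) * (π / ((H : ℝ) + 1))) / sin ((h : ℝ) * (π / ((H : ℝ) + 1))) *
          sin (2 * h * y))) := by ring
    rw [this, ← w, Finset.mul_sum]
    refine Finset.sum_congr rfl fun k _ => ?_
    have : 2 * (h : ℝ) * (y - ((k : ℝ) + 1) * (π / ((H : ℝ) + 1)))
      = 2 * h * y - ((k : ℝ) + 1) * (2 * (h : ℝ) * (π / ((H : ℝ) + 1))) := by ring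
    rw [this]; ring
  rw [e]; push_cast; ring

lemma cotD (H : ℕ) (x : ℝ) (hx : sin x ≠ 0) :
    sin (((H : ℝ) + 1) * x) ^ 2 * (cos x / sin x)
      = Df H x + sin (((H : ℝ) + 1) * x) * cos (((H : ℝ) + 1) * x) := by
  have d := dsum H x
  change 2 * sin x * Df H x = _ at d
  have e : (2 * (H : ℝ) + 1) * x = 2 * (((H : ℝ) + 1) * x) - x := by ring
  rw [e, cos_sub, cos_two_mul, sin_two_mul] at d
  have p := sin_sq_add_cos_sq (((H : ℝ) + 1) * x)
  generalize sin (((H : ℝ) + 1) * x) = S at *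
  generalize cos (((H : ℝ) + 1) * x) = C at *
  field_simp
  linear_combination (-1/2) * d + cos x * p

lemma generic (H : ℕ) (w : ℝ) (hw0 : 0 < w) (hw1 : w < 1)
    (hn : ∀ k : ℤ, ((H : ℝ) + 1) * w ≠ k) :
    Df H (π * w) ≤ -((H : ℝ) + 1) * (π * w) + π / ((H : ℝ) + 1) ^ 2 *
      (((H : ℝ) + 1) ^ 2 * ((H : ℝ) + 2) / 2 + ((H : ℝ) + 1) *
        ∑ h ∈ Finset.Icc 1 H, ((H : ℝ) + 1 - h) * (cos (2 * h * (π * w)) -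
        cos ((h : ℝ) * (π / ((H : ℝ) + 1))) / sin ((h : ℝ) * (π / ((H : ℝ) + 1))) *
          sin (2 * h * (π * w)))) := by
  rw [← sumkQ]
  have hN : 0 < (H : ℝ) + 1 := by positivity
  have hp := pi_pos
  set N : ℝ := (H : ℝ) + 1 with hNd
  set y := π * w with hy
  set t := π / N with ht
  have ht0 : 0 < t := by positivity
  have htN : N * t = π := by rw [ht]; field_simp
  have hy0 : 0 < y := by positivity
  have hy1 : y < π := by rw [hy]; nlinarith
  set x : ℕ → ℝ := fun k => y - (k : ℝ) * t with hx
  have xne : ∀ k, x k ≠ 0 := by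
    intro k hk
    apply hn k
    have : π * w = k * t := by simp only [hx] at hk; linarith
    rw [ht] at this
    field_simp at this
    push_cast
    linarith
  have xlo : ∀ k, k ≤ H + 1 → -π < x k := by
    intro k hk
    have : (k : ℝ) ≤ N := by rw [hNd]; exact_mod_cast hk
    simp only [hx]; nlinarith
  have xhi : ∀ k, x k < π := by
    intro k
    have : 0 ≤ (k : ℝ) * t := by positivity
    simp only [hx]; linarith
  have hstep : ∀ k ∈ Finset.range (H + 1),
      x k * (cos (x k) / sin (x k)) - x (k + 1) * (cos (x (k + 1)) / sin (x (k + 1)))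
      ≤ t * (cos (x (k + 1)) / sin (x (k + 1)) - x (k + 1) / sin (x (k + 1)) ^ 2) := by
    intro k hk
    rw [Finset.mem_range] at hk
    have e : x (k + 1) + t = x k := by simp only [hx]; push_cast; ring
    have := key (x (k + 1)) t ht0 (xlo _ (by omega)) (by rw [e]; exact xhi k) (xne _)
      (by rw [e]; exact xne k)
    rwa [e] at this
  have hsum := Finset.sum_le_sum hstep
  rw [Finset.sum_range_sub' (fun k => x k * (cos (x k) / sin (x k)))] at hsum
  have e0 : x 0 = y := by simp [hx]
  have eN : x (H + 1) = y - π := by simp only [hx]; push_cast; rw [← hNd, htN]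
  have hl : x 0 * (cos (x 0) / sin (x 0)) - x (H + 1) * (cos (x (H + 1)) / sin (x (H + 1)))
      = π * (cos y / sin y) := by
    rw [e0, eN, cos_sub_pi, sin_sub_pi, neg_div_neg_eq]; ring
  rw [hl] at hsum
  have hsy : sin y ≠ 0 := (sin_pos_of_pos_of_lt_pi hy0 hy1).ne'
  have hs0 : 0 ≤ sin (N * y) ^ 2 := by positivity
  have hmul := mul_le_mul_of_nonneg_left hsum hs0
  have hL : sin (N * y) ^ 2 * (π * (cos y / sin y))
      = π * (Df H y + sin (N * y) * cos (N * y)) := by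
    rw [← cotD H y hsy]; ring
  have hxN : ∀ k, N * x k = N * y - k * π := by
    intro k; simp only [hx]; rw [← htN]; ring
  have hpm : ∀ k : ℕ, ((-1 : ℝ) ^ k) * (-1) ^ k = 1 := by
    intro k; rw [← mul_pow]; norm_num
  have hS2 : ∀ k, sin (N * x k) ^ 2 = sin (N * y) ^ 2 := by
    intro k; rw [hxN, sin_sub_nat_mul_pi]
    linear_combination sin (N * y) ^ 2 * hpm k
  have hSC : ∀ k, sin (N * x k) * cos (N * x k) = sin (N * y) * cos (N * y) := by
    intro k; rw [hxN, sin_sub_nat_mul_pi, cos_sub_nat_mul_pi]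
    linear_combination sin (N * y) * cos (N * y) * hpm k
  have hR : sin (N * y) ^ 2 * ∑ k ∈ Finset.range (H + 1),
      t * (cos (x (k + 1)) / sin (x (k + 1)) - x (k + 1) / sin (x (k + 1)) ^ 2)
      = ∑ k ∈ Finset.range (H + 1), (t * Df H (x (k + 1)) + t * (sin (N * y) * cos (N * y))
        - t * y * Qf H (x (k + 1)) + t ^ 2 * (((k : ℝ) + 1) * Qf H (x (k + 1)))) := by
    rw [Finset.mul_sum]
    refine Finset.sum_congr rfl fun k hk => ?_
    rw [Finset.mem_range] at hk
    have hsk := sin_ne_aux (x (k + 1)) (xlo _ (by omega)) (xhi _) (xne _)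
    have c := cotD H (x (k + 1)) hsk
    rw [← hNd, hS2, hSC] at c
    have q := qsum H (x (k + 1))
    rw [← hNd, hS2] at q
    have q' : sin (N * y) ^ 2 * (x (k + 1) / sin (x (k + 1)) ^ 2) = x (k + 1) * Qf H (x (k + 1)) := by
      rw [← q]; field_simp
    have xe : x (k + 1) = y - ((k : ℝ) + 1) * t := by simp only [hx]; push_cast; ring
    calc _ = t * (sin (N * y) ^ 2 * (cos (x (k + 1)) / sin (x (k + 1)))
          - sin (N * y) ^ 2 * (x (k + 1) / sin (x (k + 1)) ^ 2)) := by ring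
      _ = t * (Df H (x (k + 1)) + sin (N * y) * cos (N * y)
            - (y - ((k : ℝ) + 1) * t) * Qf H (x (k + 1))) := by rw [c, q', ← xe]
      _ = _ := by ring
  rw [hL, hR] at hmul
  rw [Finset.sum_add_distrib, Finset.sum_sub_distrib, Finset.sum_add_distrib, Finset.sum_const,
    Finset.card_range, nsmul_eq_mul, ← Finset.mul_sum, ← Finset.mul_sum, ← Finset.mul_sum] at hmul
  have xe : ∀ k : ℕ, x (k + 1) = y - ((k : ℝ) + 1) * t := by
    intro k; simp only [hx]; push_cast; ring
  simp only [xe] at hmul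
  have sD := sumD H y
  have sQ := sumQ H y
  rw [← hNd, ← ht] at sD sQ
  rw [sD, sQ] at hmul
  push_cast at hmul
  rw [← hNd] at hmul
  set X := ∑ k ∈ Finset.range (H + 1), ((k : ℝ) + 1) * Qf H (y - ((k : ℝ) + 1) * t) with hX
  have e1 : N * (t * (sin (N * y) * cos (N * y))) = π * (sin (N * y) * cos (N * y)) := by
    rw [← htN]; ring
  have e2 : t * y * N ^ 2 = π * (N * y) := by rw [← htN]; ring
  have e3 : t ^ 2 * X = π * (π / N ^ 2 * X) := by rw [ht]; ring
  rw [e1, e2, e3] at hmul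
  have : π * Df H y ≤ π * (-N * y + π / N ^ 2 * X) := by linarith
  exact le_of_mul_le_mul_left this hp

noncomputable def lhsF (H : ℕ) (w : ℝ) : ℝ :=
    (∑ h ∈ Finset.Icc 1 H,
        (1 / (π * (h : ℝ))) * vaalerRho ((h : ℝ) / ((H : ℝ) + 1)) *
          Real.sin (2 * π * (h : ℝ) * w))
      - (∑ h ∈ Finset.Icc 1 H,
          (1 / ((H : ℝ) + 1)) * (1 - (h : ℝ) / ((H : ℝ) + 1)) *
            Real.cos (2 * π * (h : ℝ) * w))
      - 1 / (2 * (H : ℝ) + 2)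

lemma generic' (H : ℕ) (w : ℝ) (hw0 : 0 < w) (hw1 : w < 1)
    (hn : ∀ k : ℤ, ((H : ℝ) + 1) * w ≠ k) : lhsF H w ≤ 1 / 2 - w := by
  have g := generic H w hw0 hw1 hn
  have hN : 0 < (H : ℝ) + 1 := by positivity
  have hp := pi_pos
  have e : lhsF H w = 1 / (π * ((H : ℝ) + 1)) * Df H (π * w) - 1 / ((H : ℝ) + 1) ^ 2 *
      ∑ h ∈ Finset.Icc 1 H, ((H : ℝ) + 1 - h) * (cos (2 * h * (π * w)) -
        cos ((h : ℝ) * (π / ((H : ℝ) + 1))) / sin ((h : ℝ) * (π / ((H : ℝ) + 1))) *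
          sin (2 * h * (π * w))) - 1 / (2 * (H : ℝ) + 2) := by
    unfold lhsF Df
    congr 1
    rw [Finset.mul_sum, Finset.mul_sum, ← Finset.sum_sub_distrib, ← Finset.sum_sub_distrib]
    refine Finset.sum_congr rfl fun h hh => ?_
    rw [Finset.mem_Icc] at hh
    have hh0 : (0 : ℝ) < h := by exact_mod_cast hh.1
    have a1 : 2 * π * (h : ℝ) * w = 2 * h * (π * w) := by ring
    have a2 : π * ((h : ℝ) / ((H : ℝ) + 1)) = h * (π / ((H : ℝ) + 1)) := by ring
    unfold vaalerRho
    rw [a1, a2]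
    generalize cos ((h : ℝ) * (π / ((H : ℝ) + 1))) / sin ((h : ℝ) * (π / ((H : ℝ) + 1))) = c
    generalize sin (2 * h * (π * w)) = S
    generalize cos (2 * h * (π * w)) = C
    field_simp
    ring
  rw [e]
  generalize (∑ h ∈ Finset.Icc 1 H, ((H : ℝ) + 1 - h) * (cos (2 * h * (π * w)) -
        cos ((h : ℝ) * (π / ((H : ℝ) + 1))) / sin ((h : ℝ) * (π / ((H : ℝ) + 1))) *
          sin (2 * h * (π * w)))) = Y at *
  have g2 := mul_le_mul_of_nonneg_left g (by positivity : 0 ≤ 1 / (π * ((H : ℝ) + 1)))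
  have e4 : 1 / (π * ((H : ℝ) + 1)) * (-((H : ℝ) + 1) * (π * w) + π / ((H : ℝ) + 1) ^ 2 *
      (((H : ℝ) + 1) ^ 2 * ((H : ℝ) + 2) / 2 + ((H : ℝ) + 1) * Y))
      = 1 / 2 - w + 1 / (2 * (H : ℝ) + 2) + 1 / ((H : ℝ) + 1) ^ 2 * Y := by
    have : 2 * (H : ℝ) + 2 = 2 * ((H : ℝ) + 1) := by ring
    rw [this]
    field_simp
    ring
  rw [e4] at g2
  linarith

lemma unitI (H : ℕ) (w : ℝ) (hw0 : 0 ≤ w) (hw1 : w < 1) : lhsF H w ≤ 1 / 2 - w := by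
  have hN : 0 < (H : ℝ) + 1 := by positivity
  have hc : Continuous (lhsF H) := by unfold lhsF; fun_prop
  have hc2 : Continuous (fun w : ℝ => 1 / 2 - w) := by fun_prop
  set j := ⌊((H : ℝ) + 1) * w⌋ with hj
  have j1 : (j : ℝ) ≤ ((H : ℝ) + 1) * w := Int.floor_le _
  have j2 : ((H : ℝ) + 1) * w < j + 1 := Int.lt_floor_add_one _
  have hb : w < (j + 1) / ((H : ℝ) + 1) := by rw [lt_div_iff₀ hN]; linarith
  have j3 : j < (H : ℤ) + 1 := by
    have : (j : ℝ) < (H : ℝ) + 1 := by nlinarith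
    exact_mod_cast this
  have j4 : (j : ℝ) + 1 ≤ (H : ℝ) + 1 := by exact_mod_cast j3
  refine le_of_tendsto_of_tendsto (b := nhdsWithin w (Set.Ioi w))
    (hc.continuousAt.tendsto.mono_left nhdsWithin_le_nhds)
    (hc2.continuousAt.tendsto.mono_left nhdsWithin_le_nhds) ?_
  filter_upwards [Ioo_mem_nhdsGT hb] with v hv
  have hv2 : ((H : ℝ) + 1) * v < j + 1 := by
    have := hv.2; rw [lt_div_iff₀ hN] at this; linarith
  have hv1 : (j : ℝ) < ((H : ℝ) + 1) * v := by nlinarith [hv.1]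
  refine generic' H v (lt_of_le_of_lt hw0 hv.1) ?_ ?_
  · by_contra hcon
    nlinarith
  · intro k hk
    rw [hk] at hv1 hv2
    have a : j < k := by exact_mod_cast hv1
    have b : k < j + 1 := by exact_mod_cast hv2
    omega

theorem stmt15 (H : ℕ) (hH : 1 ≤ H) (w : ℝ) :
    (∑ h ∈ Finset.Icc 1 H,
        (1 / (π * (h : ℝ))) * vaalerRho ((h : ℝ) / ((H : ℝ) + 1)) *
          Real.sin (2 * π * (h : ℝ) * w))
      - (∑ h ∈ Finset.Icc 1 H,
          (1 / ((H : ℝ) + 1)) * (1 - (h : ℝ) / ((H : ℝ) + 1)) *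
            Real.cos (2 * π * (h : ℝ) * w))
      - 1 / (2 * (H : ℝ) + 2)
    ≤ -(w - ⌊w⌋ - 1 / 2) := by
  have h := unitI H (Int.fract w) (Int.fract_nonneg w) (Int.fract_lt_one w)
  have e : lhsF H (Int.fract w) = lhsF H w := by
    have a : ∀ k : ℕ, 2 * π * (k : ℝ) * Int.fract w
        = 2 * π * (k : ℝ) * w - ((k * ⌊w⌋ : ℤ) : ℝ) * (2 * π) := by
      intro k; rw [Int.fract]; push_cast; ring
    unfold lhsF
    simp only [a, sin_sub_int_mul_two_pi, cos_sub_int_mul_two_pi]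
  rw [e] at h
  change lhsF H w ≤ _
  rw [Int.fract] at h
  linarith
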